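/- Let D be a central division algebra of degree d over C possessing a (maximal) subfield E with [E:C] = d, σ an automorphism of D with σ^n = i_u, u ∈ Fix(σ), and σ|_C of order n over F = C ∩ Fix(σ). Let N be the reduced norm of D(t;σ) ≅ (D(x), σ̃, ux) over F(x). Then for every f ∈ D[t;σ] of degree m, N(f) ∈ F[x] and deg_x N(f) = d·m. -/

import Mathlib

set_option linter.style.haveILetI false

section NrdHelpers
open Polynomial TensorProduct

theorem nrd_indep {K A Ω B : Type*} [Field K] [Ring A] [Algebra K A]
    (hinv : ∀ a : A, a ≠ 0 → ∃ b : A, a * b = 1)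
    (hcent : ∀ a : A, (∀ b : A, a * b = b * a) → ∃ c : K, a = algebraMap K A c)
    [Field Ω] [Algebra K Ω] [Ring B] [Nontrivial B] [Algebra Ω B] [Algebra K B]
    [IsScalarTower K Ω B] (ρ : A →ₐ[K] B) {I : Type*} (ω : I → Ω)
    (hω : LinearIndependent K ω) (s : Finset I) :
    ∀ a : I → A, ∑ i ∈ s, ω i • ρ (a i) = 0 → ∀ i ∈ s, a i = 0 := by
  classical
  induction s using Finset.induction_on with
  | empty => simp
  | insert i0 s hi0 ih =>
    intro a ha
    have key : a i0 = 0 := by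
      by_contra h0
      obtain ⟨b0, hb0⟩ := hinv _ h0
      have h1 : ∑ i ∈ insert i0 s, ω i • ρ (a i * b0) = 0 := by
        have := congrArg (fun z => z * ρ b0) ha
        simpa [Finset.sum_mul] using this
      have hc : ∀ i ∈ s, ∀ b : A, (a i * b0) * b = b * (a i * b0) := by
        intro i hi b
        have h2 : ∑ i ∈ s, ω i • ρ (a i * b0 * b - b * (a i * b0)) = 0 := by
          have e1 := congrArg (fun z => z * ρ b) h1
          have e2 := congrArg (fun z => ρ b * z) h1
          simp only [zero_mul, mul_zero, Finset.sum_mul, Finset.mul_sum] at e1 e2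
          have : ∑ i ∈ insert i0 s, ω i • ρ (a i * b0 * b - b * (a i * b0)) = 0 := by
            rw [← sub_self (0 : B)]
            nth_rewrite 2 [← e2]
            rw [← e1, ← Finset.sum_sub_distrib]
            refine Finset.sum_congr rfl fun i _ => ?_
            simp [smul_sub]
          rw [Finset.sum_insert hi0] at this
          simpa [hb0] using this
        exact sub_eq_zero.1 (ih _ h2 i hi)
      have hc' : ∀ i ∈ insert i0 s, ∃ c : K, a i * b0 = algebraMap K A c := by
        intro i hi
        rcases Finset.mem_insert.1 hi with rfl | hi
        · exact ⟨1, by simp [hb0]⟩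
        · exact hcent _ (hc i hi)
      choose! c hc'' using hc'
      have h3 : algebraMap Ω B (∑ i ∈ insert i0 s, c i • ω i) = 0 := by
        rw [← h1, map_sum]
        refine Finset.sum_congr rfl fun i hi => ?_
        rw [hc'' i hi, AlgHom.commutes, Algebra.smul_def, Algebra.smul_def, map_mul,
          ← IsScalarTower.algebraMap_apply K Ω B, ← Algebra.commutes]
      have h4 := (map_eq_zero_iff _ (algebraMap Ω B).injective).1 h3
      have h5 := linearIndependent_iff'.1 hω _ _ h4 i0 (Finset.mem_insert_self _ _)
      have h6 := hc'' i0 (Finset.mem_insert_self _ _)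
      rw [h5, hb0, map_zero] at h6
      exact h0 (by rw [← mul_one (a i0), h6, mul_zero])
    intro i hi
    rcases Finset.mem_insert.1 hi with rfl | hi
    · exact key
    · rw [Finset.sum_insert hi0, key] at ha
      exact ih a (by simpa using ha) i hi

theorem nrd_inj {K A Ω B : Type*} [Field K] [Ring A] [Algebra K A]
    (hinv : ∀ a : A, a ≠ 0 → ∃ b : A, a * b = 1)
    (hcent : ∀ a : A, (∀ b : A, a * b = b * a) → ∃ c : K, a = algebraMap K A c)
    [Field Ω] [Algebra K Ω] [Ring B] [Nontrivial B] [Algebra Ω B] [Algebra K B]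
    [IsScalarTower K Ω B] (ρ : A →ₐ[K] B) :
    Function.Injective (Algebra.TensorProduct.lift (Algebra.ofId Ω B) ρ
      (fun x y => Algebra.commutes x (ρ y))) := by
  rw [injective_iff_map_eq_zero]
  intro z hz
  let b := Module.Free.chooseBasis K Ω
  let e := TensorProduct.equivFinsuppOfBasisLeft (M := Ω) (N := A) b
  obtain ⟨c, rfl⟩ := e.symm.surjective z
  rw [TensorProduct.equivFinsuppOfBasisLeft_symm_apply] at hz ⊢
  rw [Finsupp.sum, map_sum] at hz
  have := nrd_indep hinv hcent ρ b b.linearIndependent c.support c (by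
    rw [← hz]
    refine Finset.sum_congr rfl fun i _ => ?_
    rw [Algebra.smul_def]
    have h := Algebra.TensorProduct.lift_tmul (Algebra.ofId Ω B) ρ
      (fun x y => Algebra.commutes x (ρ y)) (b i) (c i)
    exact h.symm)
  exact Finset.sum_eq_zero fun i hi => by rw [this i hi]; exact tmul_zero _ _

theorem nrd_dvd {Ω W I : Type*} [Field Ω] [AddCommGroup W] [Module Ω W] [Module.Finite Ω W]
    [Fintype I] [DecidableEq I] [Nonempty I]
    (φ : Matrix I I Ω →ₐ[Ω] Module.End Ω W) : Fintype.card I ∣ Module.finrank Ω W := by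
  obtain ⟨o⟩ := ‹Nonempty I›
  let P : Module.End Ω W := φ (Matrix.single o o 1)
  have hmul : ∀ i j k l w, φ (Matrix.single i j 1) (φ (Matrix.single k l 1) w) =
      φ (Matrix.single i j 1 * Matrix.single k l 1) w := by
    intro i j k l w; rw [map_mul]; rfl
  let f : W →ₗ[Ω] (I → LinearMap.range P) := LinearMap.pi fun i =>
    LinearMap.codRestrict _ (φ (Matrix.single o i 1)) (fun w =>
      ⟨φ (Matrix.single o i 1) w, by simp [P, hmul]⟩)
  let g : (I → LinearMap.range P) →ₗ[Ω] W := ∑ i, (φ (Matrix.single i o 1)) ∘ₗ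
    (Submodule.subtype _) ∘ₗ (LinearMap.proj i)
  have hgf : g ∘ₗ f = LinearMap.id := by
    ext w
    simp only [g, f, LinearMap.comp_apply, LinearMap.sum_apply, LinearMap.id_apply]
    have : ∀ i, φ (Matrix.single i o 1) (φ (Matrix.single o i 1) w) =
        φ (Matrix.single i i 1) w := by intro i; simp [hmul]
    have h1 : ∑ i, φ (Matrix.single i i 1) w = w := by
      rw [← LinearMap.sum_apply, ← map_sum]
      have : ∑ i : I, Matrix.single i i (1 : Ω) = 1 := by
        ext a b
        simp [Matrix.sum_apply, Matrix.single_apply, Matrix.one_apply, ite_and]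
      rw [this, map_one]; rfl
    nth_rewrite 2 [← h1]
    exact Finset.sum_congr rfl fun i _ => this i
  have hfg : f ∘ₗ g = LinearMap.id := by
    refine LinearMap.ext fun y => ?_
    funext i
    apply Subtype.ext
    have hy : ∀ k, ∃ w, P w = (y k : W) := fun k => (y k).2
    choose w hw using hy
    change φ (Matrix.single o i 1) (g y) = y i
    simp only [g, LinearMap.comp_apply, LinearMap.sum_apply, map_sum]
    change ∑ k, φ (Matrix.single o i 1) (φ (Matrix.single k o 1) (y k : W)) = _
    rw [Finset.sum_eq_single i]
    · rw [hmul, ← hw]; simp [P, hmul]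
    · intro k _ hk
      rw [hmul, Matrix.single_mul_single_of_ne _ _ _ _ (Ne.symm hk)]; simp
    · simp
  let e : W ≃ₗ[Ω] (I → LinearMap.range P) := LinearEquiv.ofLinearMap f g hfg hgf
  rw [e.finrank_eq, Module.finrank_pi_fintype]
  simp


theorem nrd_charpoly_pi {K V V0 ι : Type*} [CommRing K] [AddCommGroup V] [Module K V]
    [AddCommGroup V0] [Module K V0] [Module.Free K V0] [Module.Finite K V0] [Module.Free K V]
    [Module.Finite K V] [Fintype ι]
    (e : V ≃ₗ[K] (ι → V0)) (T : Module.End K V) (S : Module.End K V0)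
    (h : ∀ v i, e (T v) i = S (e v i)) : T.charpoly = S.charpoly ^ Fintype.card ι := by
  classical
  have h1 : e.conj T = LinearMap.pi (fun i ↦ S.comp (LinearMap.proj i)) := by
    refine LinearMap.ext fun y => funext fun i => ?_
    simp [LinearEquiv.conj_apply, h]
  rw [← LinearEquiv.charpoly_conj e T, h1]
  let b := Module.Free.chooseBasis K V0
  let B := (Pi.basis (fun _ : ι ↦ b)).reindex <|
    (Equiv.sigmaEquivProd _ _).trans (Equiv.prodComm _ _)
  rw [← LinearMap.charpoly_toMatrix _ B, ← LinearMap.charpoly_toMatrix S b]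
  have : ((LinearMap.toMatrix B B) (LinearMap.pi fun i ↦ S ∘ₗ LinearMap.proj i)) =
      Matrix.blockDiagonal (fun _ : ι ↦ LinearMap.toMatrix b b S) := by
    ext ⟨i₁, i₂⟩ ⟨j₁, j₂⟩
    unfold B
    simp_rw [LinearMap.toMatrix_apply', Matrix.blockDiagonal_apply, Module.Basis.coe_reindex,
      Function.comp_apply, Module.Basis.repr_reindex_apply, Equiv.symm_trans_apply,
      Equiv.prodComm_symm,
      Equiv.prodComm_apply, Equiv.sigmaEquivProd_symm_apply, Prod.swap_prod_mk, Pi.basis_apply,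
      Pi.basis_repr, LinearMap.pi_apply, LinearMap.coe_comp, Function.comp_apply,
      LinearMap.toMatrix_apply', LinearMap.coe_proj, Function.eval, Pi.single_apply]
    split_ifs with h
    · rfl
    · simp only [map_zero, Finsupp.coe_zero, Pi.zero_apply]
  rw [this]
  have h2 : (Matrix.blockDiagonal (fun _ : ι ↦ LinearMap.toMatrix b b S)).charmatrix =
    Matrix.blockDiagonal (fun _ : ι ↦ (LinearMap.toMatrix b b S).charmatrix) := by
    ext1 ⟨i₁, i₂⟩ ⟨j₁, j₂⟩
    simp only [Matrix.charmatrix_apply, Matrix.blockDiagonal_apply, Matrix.diagonal_apply,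
      Prod.mk.injEq]
    by_cases h : i₂ = j₂ <;> simp [h]
  rw [Matrix.charpoly, h2, Matrix.det_blockDiagonal]
  simp [Matrix.charpoly]

theorem nrd_charpoly_mat {Ω V I : Type*} [CommRing Ω] [AddCommGroup V] [Module Ω V]
    [Module.Free Ω V] [Module.Finite Ω V] [Fintype I] [DecidableEq I]
    (e : V ≃ₗ[Ω] Matrix I I Ω) (T : Module.End Ω V) (P : Matrix I I Ω)
    (h : ∀ v, e (T v) = e v * P) : T.charpoly = P.charpoly ^ Fintype.card I := by
  let S : Module.End Ω (I → Ω) := Matrix.toLin' P.transpose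
  have hS : S.charpoly = P.charpoly := by
    rw [← Matrix.charpoly_transpose P]
    exact Matrix.charpoly_toLin _ (Pi.basisFun Ω I)
  rw [← hS]
  refine nrd_charpoly_pi (e : V ≃ₗ[Ω] (I → (I → Ω))) _ S ?_
  intro v i
  refine (congrFun (h v) i).trans ?_
  simp only [S, Matrix.toLin'_apply, Matrix.mulVec_transpose]
  rfl

/-- The module over `AdjoinRoot μ` attached to an operator annihilated by `μ`. -/
noncomputable def nrdHom {K V : Type*} [Field K] [AddCommGroup V] [Module K V] (T : Module.End K V)
    (μ : K[X]) (h : aeval T μ = 0) : AdjoinRoot μ →+* Module.End K V :=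
  Ideal.Quotient.lift _ (aeval T : K[X] →ₐ[K] Module.End K V).toRingHom (by
    intro a ha
    obtain ⟨b, rfl⟩ := Ideal.mem_span_singleton.1 ha
    simp [h])

theorem nrdHom_mk {K V : Type*} [Field K] [AddCommGroup V] [Module K V] (T : Module.End K V)
    (μ : K[X]) (h : aeval T μ = 0) (p : K[X]) :
    nrdHom T μ h (AdjoinRoot.mk μ p) = aeval T p := rfl

theorem nrd_main_aux {K A Ω I : Type*} [Field K] [Ring A] [IsDomain A] [Algebra K A]
    [Module.Finite K A]
    (hinv : ∀ a : A, a ≠ 0 → ∃ b : A, a * b = 1)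
    (hcent : ∀ a : A, (∀ b : A, a * b = b * a) → ∃ c : K, a = algebraMap K A c)
    [Field Ω] [Algebra K Ω] [IsAlgClosed Ω]
    [Fintype I] [DecidableEq I] [Nonempty I]
    (hr : Module.finrank K A = Fintype.card I * Fintype.card I)
    (ρ : A →ₐ[K] Matrix I I Ω) (f : A) :
    ∃ c : K, (ρ f).det = algebraMap K Ω c := by
  let Φ0 := Algebra.TensorProduct.lift (Algebra.ofId Ω (Matrix I I Ω)) ρ
      (fun x y => Algebra.commutes x (ρ y))
  have hΦinj : Function.Injective Φ0 := nrd_inj hinv hcent ρ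
  have hΦbij : Function.Bijective Φ0 := by
    refine ⟨hΦinj, ?_⟩
    have := (LinearMap.injective_iff_surjective_of_finrank_eq_finrank (f := Φ0.toLinearMap)
      (by rw [Module.finrank_baseChange, hr, Module.finrank_matrix]; simp)).1 hΦinj
    exact this
  let Φ : Ω ⊗[K] A ≃ₐ[Ω] Matrix I I Ω := AlgEquiv.ofBijective Φ0 hΦbij
  have hintg : IsIntegral K f := Algebra.IsIntegral.isIntegral f
  set μ := minpoly K f with hμ
  have hirr : Irreducible μ := minpoly.irreducible hintg
  have hmonic : μ.Monic := minpoly.monic hintg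
  haveI : Fact (Irreducible μ) := ⟨hirr⟩
  let T : Module.End K A := LinearMap.mulRight K f
  have hTp : ∀ (p : K[X]) (a : A), aeval T p a = a * aeval f p := by
    intro p
    induction p using Polynomial.induction_on' with
    | add p q hp hq => intro a; simp [hp, hq, mul_add]
    | monomial n c =>
      intro a
      have : ∀ n (a : A), (T ^ n) a = a * f ^ n := by
        intro n
        induction n with
        | zero => simp
        | succ n ih => intro a; rw [pow_succ', Module.End.mul_apply, ih]; simp [T, pow_succ, mul_assoc]
      simp only [aeval_monomial, Module.End.mul_apply, Module.algebraMap_end_apply, this]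
      rw [Algebra.smul_def, ← mul_assoc, ← mul_assoc, Algebra.commutes]
  have hT : aeval T μ = 0 := by
    ext a; rw [hTp, minpoly.aeval]; simp
  let M := AdjoinRoot μ
  letI : Module M A := Module.compHom A (nrdHom T μ hT)
  have hsm : ∀ (p : K[X]) (a : A), (AdjoinRoot.mk μ p : M) • a = a * aeval f p := by
    intro p a; rw [← hTp]; rfl
  haveI : IsScalarTower K M A := by
    constructor
    intro c m a
    obtain ⟨p, rfl⟩ := AdjoinRoot.mk_surjective m
    have : c • (AdjoinRoot.mk μ p) = AdjoinRoot.mk μ (c • p) := by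
      rw [AdjoinRoot.smul_mk]
    rw [this, hsm, hsm]; simp
  haveI : Module.Finite M A := Module.Finite.of_restrictScalars_finite K M A
  haveI : Module.Finite K M := hmonic.finite_adjoinRoot
  set q := Module.finrank M A with hq
  have hk : Module.finrank K M = μ.natDegree := by
    exact (AdjoinRoot.powerBasis' hmonic).finrank
  have htower : μ.natDegree * q = Fintype.card I * Fintype.card I := by
    rw [← hk, ← hr]; exact Module.finrank_mul_finrank K M A
  -- root in Ω
  have hdeg : (μ.map (algebraMap K Ω)).degree ≠ 0 := by
    rw [degree_map]; exact hirr.degree_pos.ne'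
  obtain ⟨α, hα⟩ := IsAlgClosed.exists_root _ hdeg
  let g : M →+* Ω := AdjoinRoot.lift (algebraMap K Ω) α (by rwa [IsRoot, eval_map] at hα)
  letI : Algebra M Ω := g.toAlgebra
  haveI : IsScalarTower K M Ω := IsScalarTower.of_algebraMap_eq (fun c => by
    change _ = g (AdjoinRoot.of μ c)
    exact (AdjoinRoot.lift_of _).symm)
  -- divisibility
  have hdvd : Fintype.card I ∣ q := by
    have hlin : ∀ (a : A) (m : M) (b : A), a * (m • b) = m • (a * b) := by
      intro a m b
      obtain ⟨p, rfl⟩ := AdjoinRoot.mk_surjective m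
      rw [hsm, hsm, mul_assoc]
    let lm : A →ₐ[K] Module.End M A := 
      { toFun := fun a => 
          { toFun := fun b => a * b
            map_add' := fun b c => mul_add a b c
            map_smul' := fun m b => hlin a m b }
        map_one' := by ext; simp
        map_mul' := fun a b => by ext; simp [mul_assoc]
        map_zero' := by ext; simp
        map_add' := fun a b => by ext; simp [add_mul]
        commutes' := fun c => by
          ext b
          simp [Algebra.smul_def] }
    let bc : Module.End M A →ₐ[K] Module.End Ω (Ω ⊗[M] A) :=
      (Module.End.baseChangeHom M Ω A).restrictScalars K
    let ψ : Ω ⊗[K] A →ₐ[Ω] Module.End Ω (Ω ⊗[M] A) :=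
      Algebra.TensorProduct.lift (Algebra.ofId Ω _) (bc.comp lm)
        (fun x y => Algebra.commutes x _)
    have := nrd_dvd (ψ.comp (Φ.symm : Matrix I I Ω →ₐ[Ω] Ω ⊗[K] A))
    rwa [Module.finrank_baseChange] at this
  -- characteristic polynomials
  have hc1 : T.charpoly = μ ^ q := by
    let b := Module.finBasis M A
    let e : A ≃ₗ[K] (Fin q → M) := b.equivFun.restrictScalars K
    let S : Module.End K M := LinearMap.mulLeft K (AdjoinRoot.root μ)
    have := nrd_charpoly_pi e T S (by
      intro a i
      have h1 : T a = (AdjoinRoot.root μ : M) • a := by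
        have := hsm X a
        rw [aeval_X] at this
        exact this.symm
      rw [h1]
      change b.equivFun _ i = _
      rw [map_smul]
      rfl)
    rw [this, Fintype.card_fin]
    congr 1
    let pb := AdjoinRoot.powerBasis' hmonic
    have h2 := charpoly_leftMulMatrix pb
    have h3 : minpoly K pb.gen = μ := by
      rw [AdjoinRoot.powerBasis'_gen, AdjoinRoot.minpoly_root hirr.ne_zero, hmonic.leadingCoeff]
      simp
    rw [h3] at h2
    rw [← LinearMap.charpoly_toMatrix S pb.basis]
    exact h2
  have hc2 : (T.charpoly).map (algebraMap K Ω) = (ρ f).charpoly ^ Fintype.card I := by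
    rw [← LinearMap.charpoly_baseChange]
    refine nrd_charpoly_mat Φ.toLinearEquiv _ (ρ f) ?_
    intro v
    have h1 : (LinearMap.baseChange Ω T) v = v * (1 ⊗ₜ f) := by
      induction v using TensorProduct.induction_on with
      | zero => simp
      | tmul x y => simp [T]
      | add x y hx hy => rw [map_add, hx, hy, add_mul]
    rw [h1]
    have h2 : Φ0 (1 ⊗ₜ f) = ρ f := by
      have h := Algebra.TensorProduct.lift_tmul (Algebra.ofId Ω (Matrix I I Ω)) ρ
        (fun x y => Algebra.commutes x (ρ y)) 1 f
      refine h.trans ?_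
      rw [map_one, one_mul]
    rw [← h2]
    exact map_mul Φ0 _ _
  obtain ⟨s, hs⟩ := hdvd
  have hc3 : (ρ f).charpoly = (μ.map (algebraMap K Ω)) ^ s := by
    rw [hc1, hs, mul_comm, pow_mul, Polynomial.map_pow, Polynomial.map_pow] at hc2
    have hI : Fintype.card I ≠ 0 := Fintype.card_ne_zero
    have m1 : ((μ.map (algebraMap K Ω)) ^ s).Monic := (hmonic.map _).pow s
    have m2 : (ρ f).charpoly.Monic := Matrix.charpoly_monic _
    apply eq_of_monic_of_associated m2 m1
    exact associated_of_dvd_dvd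
      ((IsIntegrallyClosed.pow_dvd_pow_iff hI).1 hc2.symm.dvd)
      ((IsIntegrallyClosed.pow_dvd_pow_iff hI).1 hc2.dvd)
  refine ⟨(-1) ^ Fintype.card I * (μ ^ s).coeff 0, ?_⟩
  rw [Matrix.det_eq_sign_charpoly_coeff, hc3, ← Polynomial.map_pow, coeff_map]
  simp

theorem nrd_main {K A L I : Type*} [Field K] [Ring A] [IsDomain A] [Algebra K A]
    [Module.Finite K A]
    (hinv : ∀ a : A, a ≠ 0 → ∃ b : A, a * b = 1)
    (hcent : ∀ a : A, (∀ b : A, a * b = b * a) → ∃ c : K, a = algebraMap K A c)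
    [Field L] [Algebra K L]
    [Fintype I] [DecidableEq I] [Nonempty I]
    (hr : Module.finrank K A = Fintype.card I * Fintype.card I)
    (ρ : A →ₐ[K] Matrix I I L) (f : A) :
    ∃ c : K, (ρ f).det = algebraMap K L c := by
  let Ω := AlgebraicClosure L
  let h : Matrix I I L →ₐ[K] Matrix I I Ω := (IsScalarTower.toAlgHom K L Ω).mapMatrix
  obtain ⟨c, hc⟩ := nrd_main_aux hinv hcent hr (h.comp ρ) f
  refine ⟨c, (algebraMap L Ω).injective ?_⟩
  rw [← IsScalarTower.algebraMap_apply, ← hc, RingHom.map_det]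
  rfl


/-- The data of the skew polynomial ring `R = D[t;σ]`. -/
structure NrdSk (D R : Type*) [DivisionRing D] [Ring R] where
  n : ℕ
  hn : 0 < n
  σ : D ≃+* D
  u : D
  hu0 : u ≠ 0
  hσu : σ u = u
  hinner : ∀ z : D, (σ ^ n) z = u * z * u⁻¹
  ι : D →+* R
  t : R
  hmul : ∀ a : D, t * ι a = ι (σ a) * t
  coeff : R →+ (ℕ →₀ D)
  hcoeff : ∀ (a : D) (i : ℕ), coeff (ι a * t ^ i) = Finsupp.single i a
  hrepr : ∀ x : R, (coeff x).sum (fun i a => ι a * t ^ i) = x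

namespace NrdSk
variable {D R : Type*} [DivisionRing D] [Ring R] (S : NrdSk D R)

/-- The central variable. -/
def x : R := S.ι S.u⁻¹ * S.t ^ S.n

theorem tpow_mul (k : ℕ) (a : D) : S.t ^ k * S.ι a = S.ι ((S.σ ^ k) a) * S.t ^ k := by
  induction k generalizing a with
  | zero => simp
  | succ k ih =>
    rw [pow_succ, mul_assoc, S.hmul, ← mul_assoc, ih, mul_assoc]
    rfl

theorem ind {P : R → Prop} (h0 : P 0) (hadd : ∀ f g, P f → P g → P (f + g))
    (hm : ∀ a i, P (S.ι a * S.t ^ i)) (f : R) : P f := by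
  rw [← S.hrepr f, Finsupp.sum]
  exact Finset.sum_induction _ P hadd h0 fun i _ => hm _ _

theorem coeff_inj {f g : R} (h : ∀ k, S.coeff f k = S.coeff g k) : f = g := by
  rw [← S.hrepr f, ← S.hrepr g, Finsupp.ext h]

theorem σ_uinv_pow (k : ℕ) : S.σ (S.u⁻¹ ^ k) = S.u⁻¹ ^ k := by
  rw [map_pow, map_inv₀, S.hσu]

theorem σpow_uinv_pow (m k : ℕ) : (S.σ ^ m) (S.u⁻¹ ^ k) = S.u⁻¹ ^ k := by
  induction m with
  | zero => rfl
  | succ m ih =>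
    rw [pow_succ]
    change (S.σ ^ m) (S.σ _) = _
    rw [σ_uinv_pow, ih]

theorem x_ι (a : D) : S.x * S.ι a = S.ι a * S.x := by
  unfold x
  rw [mul_assoc, tpow_mul, S.hinner, ← mul_assoc, ← mul_assoc, ← map_mul, ← map_mul]
  congr 2
  rw [← mul_assoc, ← mul_assoc, inv_mul_cancel₀ S.hu0, one_mul]

theorem x_t : S.x * S.t = S.t * S.x := by
  unfold x
  have := S.σ_uinv_pow 1
  rw [pow_one] at this
  rw [← mul_assoc, S.hmul, this, mul_assoc, mul_assoc, ← pow_succ, ← pow_succ']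

theorem x_comm (g : R) : Commute S.x g := by
  refine S.ind (P := fun g => Commute S.x g) (Commute.zero_right _) (fun _ _ => Commute.add_right)
    (fun a i => ?_) g
  exact Commute.mul_right (S.x_ι a) (Commute.pow_right S.x_t i)

theorem x_pow (l : ℕ) : S.x ^ l = S.ι (S.u⁻¹ ^ l) * S.t ^ (S.n * l) := by
  induction l with
  | zero => simp
  | succ l ih =>
    rw [pow_succ', ih]
    unfold x
    rw [mul_assoc, ← mul_assoc (S.t ^ S.n), tpow_mul, σpow_uinv_pow, mul_assoc, ← mul_assoc,
      ← map_mul, ← pow_add, ← pow_succ']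
    congr 2
    ring

theorem coeff_xt (b : D) (l i : ℕ) :
    S.coeff (S.ι b * S.x ^ l * S.t ^ i) = Finsupp.single (S.n * l + i) (b * S.u⁻¹ ^ l) := by
  rw [x_pow, ← mul_assoc, ← map_mul, mul_assoc, ← pow_add, S.hcoeff]

theorem coeff_ι_mul (a : D) (g : R) (k : ℕ) : S.coeff (S.ι a * g) k = a * S.coeff g k := by
  refine S.ind (P := fun g => S.coeff (S.ι a * g) k = a * S.coeff g k) (by simp) ?_ ?_ g
  · intro f g hf hg; simp [mul_add, hf, hg]
  · intro b i
    rw [← mul_assoc, ← map_mul, S.hcoeff, S.hcoeff]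
    by_cases h : i = k <;> simp [h]

theorem coeff_mul_ι (a : D) (g : R) (k : ℕ) :
    S.coeff (g * S.ι a) k = S.coeff g k * (S.σ ^ k) a := by
  refine S.ind (P := fun g => S.coeff (g * S.ι a) k = S.coeff g k * (S.σ ^ k) a) (by simp) ?_ ?_ g
  · intro f g hf hg; simp [add_mul, hf, hg]
  · intro b i
    rw [mul_assoc, tpow_mul, ← mul_assoc, ← map_mul, S.hcoeff, S.hcoeff]
    by_cases h : i = k <;> simp [h]

theorem coeff_mul_t (g : R) (k : ℕ) : S.coeff (g * S.t) (k + 1) = S.coeff g k := by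
  refine S.ind (P := fun g => S.coeff (g * S.t) (k + 1) = S.coeff g k) (by simp) ?_ ?_ g
  · intro f g hf hg; simp [add_mul, hf, hg]
  · intro b i
    rw [mul_assoc, ← pow_succ, S.hcoeff, S.hcoeff]
    by_cases h : i = k <;> simp [h]

theorem coeff_t_mul (g : R) (k : ℕ) : S.coeff (S.t * g) (k + 1) = S.σ (S.coeff g k) := by
  refine S.ind (P := fun g => S.coeff (S.t * g) (k + 1) = S.σ (S.coeff g k)) (by simp) ?_ ?_ g
  · intro f g hf hg; simp [mul_add, hf, hg]
  · intro b i
    rw [← mul_assoc, S.hmul, mul_assoc, ← pow_succ', S.hcoeff, S.hcoeff]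
    by_cases h : i = k <;> simp [h]

/-- Degree at most `m`. -/
def dle (f : R) (m : ℕ) : Prop := ∀ i, m < i → S.coeff f i = 0

theorem coeff_mul (f g : R) : S.coeff (f * g) = (S.coeff f).sum fun i a => (S.coeff g).sum fun k b =>
    Finsupp.single (i + k) (a * (S.σ ^ i) b) := by
  conv_lhs => rw [← S.hrepr f, ← S.hrepr g]
  simp only [Finsupp.sum, Finset.sum_mul, Finset.mul_sum, map_sum]
  rw [Finset.sum_comm]
  refine Finset.sum_congr rfl fun i _ => Finset.sum_congr rfl fun k _ => ?_
  rw [mul_assoc, ← mul_assoc (S.t ^ _), tpow_mul, mul_assoc, ← mul_assoc, ← map_mul, ← pow_add,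
    S.hcoeff]

theorem dle_mul {f g : R} {m k : ℕ} (hf : S.dle f m) (hg : S.dle g k) : S.dle (f * g) (m + k) := by
  intro i hi
  rw [coeff_mul, Finsupp.sum, Finsupp.finsetSum_apply]
  refine Finset.sum_eq_zero fun a ha => ?_
  rw [Finsupp.sum, Finsupp.finsetSum_apply]
  refine Finset.sum_eq_zero fun b hb => ?_
  have h1 : a ≤ m := by
    by_contra h; exact (Finsupp.mem_support_iff.1 ha) (hf a (not_le.1 h))
  have h2 : b ≤ k := by
    by_contra h; exact (Finsupp.mem_support_iff.1 hb) (hg b (not_le.1 h))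
  rw [Finsupp.single_apply, if_neg (by omega)]

theorem coeff_mul_top {f g : R} {m k : ℕ} (hf : S.dle f m) (hg : S.dle g k) :
    S.coeff (f * g) (m + k) = S.coeff f m * (S.σ ^ m) (S.coeff g k) := by
  rw [coeff_mul, Finsupp.sum, Finsupp.finsetSum_apply]
  have hle : ∀ a ∈ (S.coeff f).support, ∀ b ∈ (S.coeff g).support, a ≤ m ∧ b ≤ k := by
    intro a ha b hb
    constructor
    · by_contra h; exact (Finsupp.mem_support_iff.1 ha) (hf a (not_le.1 h))
    · by_contra h; exact (Finsupp.mem_support_iff.1 hb) (hg b (not_le.1 h))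
  rw [Finset.sum_eq_single m]
  · rw [Finsupp.sum, Finsupp.finsetSum_apply, Finset.sum_eq_single k]
    · simp
    · intro b hb hbk
      rw [Finsupp.single_apply, if_neg (by omega)]
    · intro h; simp [Finsupp.notMem_support_iff.1 h]
  · intro a ha ham
    rw [Finsupp.sum, Finsupp.finsetSum_apply]
    refine Finset.sum_eq_zero fun b hb => ?_
    have := hle a ha b hb
    rw [Finsupp.single_apply, if_neg (by omega)]
  · intro h; simp [Finsupp.notMem_support_iff.1 h]

theorem exists_deg {f : R} (hf : f ≠ 0) : ∃ m, S.coeff f m ≠ 0 ∧ S.dle f m := by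
  have hs : (S.coeff f).support.Nonempty := by
    rw [Finsupp.support_nonempty_iff]
    intro h
    exact hf (S.coeff_inj (by simp [h]))
  refine ⟨(S.coeff f).support.max' hs, Finsupp.mem_support_iff.1 (Finset.max'_mem _ _), ?_⟩
  intro i hi
  by_contra h
  exact absurd (Finset.le_max' _ i (Finsupp.mem_support_iff.2 h)) (not_le.2 hi)

theorem mul_top_ne {f g : R} {m k : ℕ} (hf : S.dle f m) (hg : S.dle g k)
    (hf0 : S.coeff f m ≠ 0) (hg0 : S.coeff g k ≠ 0) : S.coeff (f * g) (m + k) ≠ 0 := by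
  rw [S.coeff_mul_top hf hg]
  exact mul_ne_zero hf0 ((map_ne_zero_iff _ (S.σ ^ m).injective).2 hg0)

theorem mul_ne {D R : Type*} [DivisionRing D] [Ring R] (S : NrdSk D R) {f g : R} (hf : f ≠ 0) (hg : g ≠ 0) : f * g ≠ 0 := by
  obtain ⟨m, h1, h2⟩ := S.exists_deg hf
  obtain ⟨k, h3, h4⟩ := S.exists_deg hg
  intro h
  apply S.mul_top_ne h2 h4 h1 h3
  simp [h]

theorem one_ne {D R : Type*} [DivisionRing D] [Ring R] (S : NrdSk D R) : (1 : R) ≠ 0 := by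
  intro h
  have := S.hcoeff 1 0
  simp [h] at this
  exact one_ne_zero (Finsupp.single_eq_zero.1 this.symm)

section theta
variable {B : Type*} [Field B] (j : B →+* D)

/-- The polynomial subring. -/
noncomputable def θ : B[X] →+* R :=
  Polynomial.eval₂RingHom' (S.ι.comp j) S.x fun _ => (S.x_comm _).symm

theorem θ_sum (p : B[X]) : S.θ j p = p.sum fun l a => S.ι (j a) * S.x ^ l := by
  change p.eval₂ _ _ = _
  rw [Polynomial.eval₂_eq_sum]; rfl

theorem θ_monomial (l : ℕ) (a : B) : S.θ j (monomial l a) = S.ι (j a) * S.x ^ l := by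
  change (monomial l a).eval₂ _ _ = _
  rw [Polynomial.eval₂_monomial]; rfl

theorem coeff_θ_mul (p : B[X]) (e : D) (i i0 : Fin S.n) (l : ℕ) :
    S.coeff (S.θ j p * (S.ι e * S.t ^ (i : ℕ))) (S.n * l + i0) =
      if i = i0 then j (p.coeff l) * e * S.u⁻¹ ^ l else 0 := by
  induction p using Polynomial.induction_on' with
  | add p q hp hq =>
    rw [map_add (S.θ j), add_mul, map_add S.coeff, Finsupp.add_apply, hp, hq]
    split_ifs <;> simp [add_mul]
  | monomial l' a =>
    rw [θ_monomial, ← mul_assoc, mul_assoc (S.ι _), ((S.x_comm _).pow_left l').eq, ← mul_assoc,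
      ← map_mul, coeff_xt, Finsupp.single_apply, coeff_monomial]
    have : S.n * l' + (i : ℕ) = S.n * l + (i0 : ℕ) ↔ (l' = l ∧ i = i0) := by
      constructor
      · intro h
        have h1 := congrArg (· / S.n) h
        have h2 := congrArg (· % S.n) h
        simp only [Nat.mul_add_div S.hn, Nat.mul_add_mod, Nat.div_eq_of_lt i.2,
          Nat.div_eq_of_lt i0.2, Nat.mod_eq_of_lt i.2, Nat.mod_eq_of_lt i0.2] at h1 h2
        exact ⟨by omega, Fin.ext h2⟩
      · rintro ⟨rfl, rfl⟩; rfl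
    simp only [this]
    by_cases h1 : l' = l <;> by_cases h2 : i = i0 <;> simp [h1, h2]

theorem coeff_sum {J : Type*} [Fintype J] (e : J → D) (p : J × Fin S.n → B[X]) (i0 : Fin S.n)
    (l : ℕ) :
    S.coeff (∑ k, S.θ j (p k) * (S.ι (e k.1) * S.t ^ (k.2 : ℕ))) (S.n * l + i0) =
      (∑ c, j ((p (c, i0)).coeff l) * e c) * S.u⁻¹ ^ l := by
  rw [map_sum, Finsupp.finsetSum_apply]
  simp only [coeff_θ_mul]
  rw [Fintype.sum_prod_type, Finset.sum_mul]
  refine Finset.sum_congr rfl fun c _ => ?_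
  simp

theorem li {J : Type*} [Fintype J] (e : J → D)
    (he : ∀ w : J → B, ∑ c, j (w c) * e c = 0 → w = 0) (p : J × Fin S.n → B[X])
    (h : ∑ k, S.θ j (p k) * (S.ι (e k.1) * S.t ^ (k.2 : ℕ)) = 0) : p = 0 := by
  funext ⟨c, i⟩
  ext l
  have h1 := S.coeff_sum j e p i l
  rw [h, map_zero, Finsupp.zero_apply] at h1
  have h2 := mul_eq_zero.1 h1.symm
  have h3 := he (fun c => (p (c, i)).coeff l)
    (h2.resolve_right (pow_ne_zero _ (inv_ne_zero S.hu0)))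
  exact congrFun h3 c

theorem li_uniq {J : Type*} [Fintype J] (e : J → D)
    (he : ∀ w : J → B, ∑ c, j (w c) * e c = 0 → w = 0) (p q : J × Fin S.n → B[X])
    (h : ∑ k, S.θ j (p k) * (S.ι (e k.1) * S.t ^ (k.2 : ℕ)) =
      ∑ k, S.θ j (q k) * (S.ι (e k.1) * S.t ^ (k.2 : ℕ))) : p = q := by
  refine sub_eq_zero.1 (S.li j e he (p - q) ?_)
  simp only [Pi.sub_apply, map_sub, sub_mul, Finset.sum_sub_distrib, h, sub_self]

theorem spans {J : Type*} [Fintype J] (e : J → D)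
    (he : ∀ z : D, ∃ w : J → B, z = ∑ c, j (w c) * e c) (f : R) :
    ∃ p : J × Fin S.n → B[X], f = ∑ k, S.θ j (p k) * (S.ι (e k.1) * S.t ^ (k.2 : ℕ)) := by
  classical
  refine S.ind (P := fun f => ∃ p : J × Fin S.n → B[X],
    f = ∑ k, S.θ j (p k) * (S.ι (e k.1) * S.t ^ (k.2 : ℕ))) ⟨0, by simp⟩ ?_ ?_ f
  · rintro _ _ ⟨p, rfl⟩ ⟨q, rfl⟩
    exact ⟨p + q, by simp [add_mul, Finset.sum_add_distrib]⟩
  · intro a m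
    obtain ⟨w, hw⟩ := he (a * S.u ^ (m / S.n))
    let i0 : Fin S.n := ⟨m % S.n, Nat.mod_lt _ S.hn⟩
    refine ⟨fun k => if k.2 = i0 then monomial (m / S.n) (w k.1) else 0, ?_⟩
    rw [Fintype.sum_prod_type]
    have h1 : ∀ c, ∑ i : Fin S.n, S.θ j (if i = i0 then monomial (m / S.n) (w c) else 0) *
        (S.ι (e c) * S.t ^ (i : ℕ)) = S.ι (j (w c) * e c) * (S.x ^ (m / S.n) * S.t ^ (m % S.n)) := by
      intro c
      rw [Finset.sum_eq_single i0]
      · rw [if_pos rfl, θ_monomial, ← mul_assoc, mul_assoc (S.ι _), ((S.x_comm _).pow_left _).eq,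
          ← mul_assoc, ← map_mul, mul_assoc]
      · intro i _ hi; simp [hi]
      · simp
    simp only [h1]
    rw [← Finset.sum_mul, ← map_sum, ← hw, x_pow, ← mul_assoc, ← mul_assoc, ← map_mul, mul_assoc a,
      inv_pow, mul_inv_cancel₀ (pow_ne_zero _ S.hu0), mul_one, mul_assoc, ← pow_add, Nat.div_add_mod]

theorem coeff_θ (p : B[X]) (k : ℕ) : S.coeff (S.θ j p) k =
    if S.n ∣ k then j (p.coeff (k / S.n)) * S.u⁻¹ ^ (k / S.n) else 0 := by
  let i : Fin S.n := ⟨0, S.hn⟩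
  let i0 : Fin S.n := ⟨k % S.n, Nat.mod_lt _ S.hn⟩
  have h := S.coeff_θ_mul j p 1 i i0 (k / S.n)
  have h1 : S.n * (k / S.n) + (i0 : ℕ) = k := Nat.div_add_mod _ _
  rw [h1] at h
  simp only [i, map_one, pow_zero, mul_one, i0, Fin.mk.injEq] at h
  rw [h]
  simp only [Nat.dvd_iff_mod_eq_zero, eq_comm]

theorem θ_central {p : B[X]} (h : ∀ g, S.θ j p * g = g * S.θ j p) (l : ℕ) :
    j (p.coeff l) ∈ Subring.center D ∧ S.σ (j (p.coeff l)) = j (p.coeff l) := by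
  have h0 : S.coeff (S.θ j p) (S.n * l) = j (p.coeff l) * S.u⁻¹ ^ l := by
    rw [coeff_θ, if_pos (dvd_mul_right _ _), Nat.mul_div_cancel_left _ S.hn]
  have hu : S.u⁻¹ ^ l ≠ 0 := pow_ne_zero _ (inv_ne_zero S.hu0)
  constructor
  · rw [Subring.mem_center_iff]
    intro a
    let i : Fin S.n := ⟨0, S.hn⟩
    have h1 := S.coeff_θ_mul j p a i i l
    simp only [i, pow_zero, mul_one, add_zero, if_true] at h1
    rw [h, coeff_ι_mul, h0, ← mul_assoc] at h1
    exact mul_right_cancel₀ hu h1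
  · have h1 := S.coeff_mul_t (S.θ j p) (S.n * l)
    rw [h, coeff_t_mul, h0, map_mul, σ_uinv_pow] at h1
    exact mul_right_cancel₀ hu h1

theorem center_θ (hord : ∀ m : ℕ, 0 < m → (∀ z ∈ Subring.center D, (S.σ ^ m) z = z) → S.n ≤ m)
    (hj : ∀ z ∈ Subring.center D, S.σ z = z → ∃ c, j c = z) (f : R) (h : ∀ g, f * g = g * f) :
    ∃ p : B[X], f = S.θ j p := by
  have hσn : ∀ q : ℕ, ∀ z ∈ Subring.center D, (S.σ ^ (S.n * q)) z = z := by
    intro q z hz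
    induction q with
    | zero => rfl
    | succ q ih =>
      rw [mul_add, mul_one, pow_add]
      change (S.σ ^ (S.n * q)) ((S.σ ^ S.n) z) = z
      rw [S.hinner, Subring.mem_center_iff.1 hz, mul_assoc, mul_inv_cancel₀ S.hu0, mul_one, ih]
  have hnd : ∀ k, ¬ S.n ∣ k → S.coeff f k = 0 := by
    intro k hk
    by_contra h0
    apply hk
    apply Nat.dvd_of_mod_eq_zero
    by_contra h1
    have := hord (k % S.n) (Nat.pos_of_ne_zero h1) (by
      intro z hz
      have h2 : (S.σ ^ k) z = z := by
        have h3 := S.coeff_mul_ι z f k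
        rw [h, coeff_ι_mul, ← Subring.mem_center_iff.1 hz] at h3
        exact (mul_left_cancel₀ h0 h3).symm
      rw [← Nat.mod_add_div k S.n, pow_add] at h2
      change (S.σ ^ _) ((S.σ ^ _) z) = z at h2
      rwa [hσn _ z hz] at h2)
    exact absurd this (not_le.2 (Nat.mod_lt _ S.hn))
  have hb : ∀ l, ∃ c, j c = S.coeff f (S.n * l) * S.u ^ l := by
    intro l
    have hun : S.u ^ l ≠ 0 := pow_ne_zero _ S.hu0
    have hσ : S.σ (S.coeff f (S.n * l)) = S.coeff f (S.n * l) := by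
      rw [← coeff_t_mul, ← h, coeff_mul_t]
    apply hj
    · rw [Subring.mem_center_iff]
      intro a
      have h1 := S.coeff_mul_ι a f (S.n * l)
      rw [h, coeff_ι_mul] at h1
      have h2 : ∀ q : ℕ, (S.σ ^ (S.n * q)) a = S.u ^ q * a * (S.u ^ q)⁻¹ := by
        intro q
        induction q generalizing a with
        | zero => simp
        | succ q ih =>
          rw [mul_add, mul_one, pow_add]
          change (S.σ ^ (S.n * q)) ((S.σ ^ S.n) a) = _
          rw [S.hinner, ih _ (by
            rw [← coeff_ι_mul, ← h, coeff_mul_ι])]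
          simp only [pow_succ, mul_inv_rev, mul_assoc]
      rw [← mul_assoc, h1, h2, mul_assoc, mul_assoc, inv_mul_cancel₀ hun, mul_one, mul_assoc]
    · rw [map_mul, hσ, map_pow, S.hσu]
  choose c hc using hb
  refine ⟨∑ l ∈ Finset.range ((S.coeff f).support.sup id + 1), monomial l (c l), ?_⟩
  apply S.coeff_inj
  intro k
  rw [coeff_θ]
  split_ifs with hk
  · obtain ⟨l, rfl⟩ := hk
    rw [Nat.mul_div_cancel_left _ S.hn, finsetSum_coeff]
    simp only [coeff_monomial, Finset.sum_ite_eq', Finset.mem_range]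
    have hun : S.u ^ l ≠ 0 := pow_ne_zero _ S.hu0
    split_ifs with hl
    · rw [hc, mul_assoc, inv_pow, mul_inv_cancel₀ hun, mul_one]
    · rw [map_zero, zero_mul]
      by_contra h0
      have h1 := Finset.le_sup (f := id) (Finsupp.mem_support_iff.2 h0)
      have h2 : l ≤ S.n * l := Nat.le_mul_of_pos_left _ S.hn
      simp only [id] at h1
      omega
  · exact hnd k hk

end theta
end NrdSk


theorem nrd_generic {Z R K : Type*} [CommRing Z] [IsDomain Z] [Ring R] [Nontrivial R] [Algebra Z R]
    [Module.Free Z R] [Module.Finite Z R] [Field K] [Algebra Z K] [IsFractionRing Z K]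
    (hdom : ∀ a b : R, a * b = 0 → a = 0 ∨ b = 0)
    (hcent : ∀ a : R, (∀ b : R, a * b = b * a) → ∃ c : Z, a = algebraMap Z R c) :
    (∀ f : R, f ≠ 0 → ∃ (g : R) (z : Z), z ≠ 0 ∧ g * f = algebraMap Z R z) ∧
    ∀ {L I : Type*} [Field L] [Algebra K L] [Algebra Z L] [IsScalarTower Z K L]
      [Fintype I] [DecidableEq I] [Nonempty I]
      (_ : Module.finrank Z R = Fintype.card I * Fintype.card I)
      (ρ : R →ₐ[Z] Matrix I I L) (f : R), ∃ a b : Z, b ≠ 0 ∧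
        algebraMap Z L b * (ρ f).det = algebraMap Z L a := by
  let A := K ⊗[Z] R
  let i : R →ₐ[Z] A := Algebra.TensorProduct.includeRight
  have hinj : Function.Injective i :=
    Algebra.TensorProduct.includeRight_injective (IsFractionRing.injective Z K)
  have hz0 : ∀ z : Z, z ≠ 0 → algebraMap Z K z ≠ 0 := fun z hz =>
    (map_ne_zero_iff _ (IsFractionRing.injective Z K)).2 hz
  have hform : ∀ a : A, ∃ (z : Z) (g : R), z ≠ 0 ∧ algebraMap Z K z • a = i g := by
    intro a
    induction a using TensorProduct.induction_on with
    | zero => exact ⟨1, 0, one_ne_zero, by simp⟩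
    | tmul k g =>
      obtain ⟨⟨y, z⟩, h⟩ := IsLocalization.surj (nonZeroDivisors Z) k
      refine ⟨z, y • g, nonZeroDivisors.ne_zero z.2, ?_⟩
      rw [TensorProduct.smul_tmul', smul_eq_mul, mul_comm, h]
      change _ = (1 : K) ⊗ₜ[Z] (y • g)
      rw [← TensorProduct.smul_tmul, Algebra.smul_def, mul_one]
    | add a b ha hb =>
      obtain ⟨z, g, hz, h⟩ := ha
      obtain ⟨z', g', hz', h'⟩ := hb
      refine ⟨z * z', z' • g + z • g', mul_ne_zero hz hz', ?_⟩
      rw [map_mul, smul_add, map_add, map_smul, map_smul, ← h, ← h', mul_smul, mul_smul,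
        smul_comm, algebraMap_smul, algebraMap_smul, algebraMap_smul, algebraMap_smul]
  haveI : Nontrivial A := hinj.nontrivial
  have hnzd : ∀ a b : A, a * b = 0 → a = 0 ∨ b = 0 := by
    intro a b hab
    obtain ⟨z, g, hz, h⟩ := hform a
    obtain ⟨z', g', hz', h'⟩ := hform b
    have h1 : i (g * g') = 0 := by
      rw [map_mul, ← h, ← h', smul_mul_smul_comm, hab, smul_zero]
    rcases hdom _ _ ((map_eq_zero_iff i hinj).1 h1) with h2 | h2
    · left; rw [h2, map_zero] at h
      exact (smul_eq_zero.1 h).resolve_left (hz0 z hz)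
    · right; rw [h2, map_zero] at h'
      exact (smul_eq_zero.1 h').resolve_left (hz0 z' hz')
  haveI : NoZeroDivisors A := ⟨fun {a b} h => hnzd a b h⟩
  haveI : IsDomain A := NoZeroDivisors.to_isDomain A
  haveI : Module.Finite K A := inferInstance
  have hunit : ∀ a : A, a ≠ 0 → IsUnit a := fun a ha => FiniteDimensional.isUnit K ha
  have hinv : ∀ a : A, a ≠ 0 → ∃ b : A, a * b = 1 := by
    intro a ha
    obtain ⟨v, rfl⟩ := hunit a ha
    exact ⟨_, v.mul_inv⟩
  have hcA : ∀ a : A, (∀ b : A, a * b = b * a) → ∃ c : K, a = algebraMap K A c := by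
    intro a ha
    obtain ⟨z, g, hz, h⟩ := hform a
    obtain ⟨c, hc⟩ := hcent g (by
      intro b
      apply hinj
      rw [map_mul, map_mul, ← h, smul_mul_assoc, ha, mul_smul_comm])
    refine ⟨(algebraMap Z K z)⁻¹ * algebraMap Z K c, ?_⟩
    rw [map_mul, ← Algebra.smul_def, ← IsScalarTower.algebraMap_apply Z K A, ← i.commutes, ← hc, ← h,
      inv_smul_smul₀ (hz0 z hz)]
  refine ⟨?_, ?_⟩
  · intro f hf
    have hf' : i f ≠ 0 := (map_ne_zero_iff i hinj).2 hf
    obtain ⟨v, hv⟩ := hunit _ hf'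
    obtain ⟨z, g, hz, h⟩ := hform (↑v⁻¹ : A)
    refine ⟨g, z, hz, hinj ?_⟩
    rw [map_mul, ← h, ← hv, smul_mul_assoc, v.inv_mul, i.commutes, IsScalarTower.algebraMap_apply Z K A,
      Algebra.algebraMap_eq_smul_one (A := A)]
  · intro L I _ _ _ _ _ _ _ hr ρ f
    let ρA : A →ₐ[K] Matrix I I L := Algebra.TensorProduct.lift (Algebra.ofId K _) ρ
      (fun x y => Algebra.commutes x (ρ y))
    have hρA : ∀ g, ρA (i g) = ρ g := by
      intro g
      have := Algebra.TensorProduct.lift_tmul (Algebra.ofId K (Matrix I I L)) ρ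
        (fun x y => Algebra.commutes x (ρ y)) 1 g
      refine Eq.trans this ?_
      rw [map_one, one_mul]
    obtain ⟨c, hc⟩ := nrd_main hinv hcA (I := I) (L := L)
      (by rw [Module.finrank_baseChange, hr]) ρA (i f)
    rw [hρA] at hc
    obtain ⟨⟨a, b⟩, hab⟩ := IsLocalization.surj (nonZeroDivisors Z) c
    refine ⟨a, b, nonZeroDivisors.ne_zero b.2, ?_⟩
    rw [hc, IsScalarTower.algebraMap_apply Z K L, IsScalarTower.algebraMap_apply Z K L a,
      ← map_mul, mul_comm, hab]

theorem nrd_det_deg {E I : Type*} [Field E] [Fintype I] [DecidableEq I] (P : Matrix I I E[X])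
    (w : I → ℕ) (n m : ℕ)
    (h : ∀ i k, P i k ≠ 0 → n * (P i k).natDegree + w k ≤ w i + m) :
    n * P.det.natDegree ≤ Fintype.card I * m := by
  by_cases hn : n = 0
  · simp [hn]
  have hn : 0 < n := Nat.pos_of_ne_zero hn
  suffices P.det.natDegree ≤ Fintype.card I * m / n from
    (Nat.mul_le_mul_left n this).trans (Nat.mul_div_le _ _)
  rw [Matrix.det_apply]
  refine natDegree_sum_le_of_forall_le _ _ fun π _ => ?_
  refine (natDegree_smul_le _ _).trans ?_
  by_cases h0 : ∏ i, P (π i) i = 0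
  · rw [h0]; simp
  rw [natDegree_prod _ _ (Finset.prod_ne_zero_iff.1 h0), Nat.le_div_iff_mul_le hn, mul_comm,
    Finset.mul_sum]
  have h1 : ∑ i, (n * (P (π i) i).natDegree + w i) ≤ ∑ i, (w (π i) + m) :=
    Finset.sum_le_sum fun i hi => h _ _ (Finset.prod_ne_zero_iff.1 h0 i hi)
  rw [Finset.sum_add_distrib, Finset.sum_add_distrib, Equiv.sum_comp π w] at h1
  simp only [Finset.sum_const, Finset.card_univ, smul_eq_mul] at h1
  omega


namespace NrdSk
variable {D R : Type*} [DivisionRing D] [Ring R] (S : NrdSk D R)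

theorem rep_hom {B : Type*} [Field B] (j : B →+* D) {J : Type*} [Fintype J] [DecidableEq J] (e : J → D)
    (he : ∀ w : J → B, ∑ c, j (w c) * e c = 0 → w = 0)
    (ρ : R → Matrix (J × Fin S.n) (J × Fin S.n) B[X])
    (hρ : ∀ g i, S.ι (e i.1) * S.t ^ (i.2 : ℕ) * g =
      ∑ k, S.θ j (ρ g i k) * (S.ι (e k.1) * S.t ^ (k.2 : ℕ))) :
    ∃ r : R →+* Matrix (J × Fin S.n) (J × Fin S.n) B[X], ∀ g, r g = ρ g := by
  have key : ∀ (g : R) (M : Matrix (J × Fin S.n) (J × Fin S.n) B[X]),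
      (∀ i : J × Fin S.n, S.ι (e i.1) * S.t ^ (i.2 : ℕ) * g =
        ∑ k, S.θ j (M i k) * (S.ι (e k.1) * S.t ^ (k.2 : ℕ))) → ρ g = M := by
    intro g M h
    funext i
    exact S.li_uniq j e he _ _ ((hρ g i).symm.trans (h i))
  refine ⟨{ toFun := ρ, map_one' := ?_, map_mul' := ?_, map_zero' := ?_, map_add' := ?_ },
    fun _ => rfl⟩
  · refine key _ _ fun i => ?_
    rw [mul_one, Finset.sum_eq_single i]
    · simp
    · intro b _ hb
      rw [Matrix.one_apply_ne hb.symm, map_zero, zero_mul]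
    · simp
  · intro g h
    refine key _ _ fun i => ?_
    rw [← mul_assoc, hρ, Finset.sum_mul]
    simp only [mul_assoc]
    simp only [← mul_assoc (S.ι _), hρ h]
    simp only [Matrix.mul_apply, map_sum, map_mul, Finset.mul_sum, Finset.sum_mul]
    rw [Finset.sum_comm]
    simp only [mul_assoc]
  · refine key _ _ fun i => ?_
    simp
  · intro g h
    refine key _ _ fun i => ?_
    rw [mul_add, hρ, hρ, ← Finset.sum_add_distrib]
    simp [add_mul]

theorem rep_scalar {B : Type*} [Field B] (j : B →+* D) {J : Type*} [Fintype J] [DecidableEq J] (e : J → D)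
    (he : ∀ w : J → B, ∑ c, j (w c) * e c = 0 → w = 0)
    (ρ : R → Matrix (J × Fin S.n) (J × Fin S.n) B[X])
    (hρ : ∀ g i, S.ι (e i.1) * S.t ^ (i.2 : ℕ) * g =
      ∑ k, S.θ j (ρ g i k) * (S.ι (e k.1) * S.t ^ (k.2 : ℕ)))
    (p : B[X]) (hp : ∀ g, S.θ j p * g = g * S.θ j p) :
    ρ (S.θ j p) = Matrix.scalar _ p := by
  funext i
  refine S.li_uniq j e he _ _ ((hρ _ i).symm.trans ?_)
  rw [Finset.sum_eq_single i]
  · rw [← hp]; simp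
  · intro b _ hb
    simp [Matrix.scalar_apply, Matrix.diagonal_apply_ne _ hb.symm]
  · simp

theorem rep_deg {B : Type*} [Field B] (j : B →+* D) {J : Type*} [Fintype J] [DecidableEq J] (e : J → D)
    (he : ∀ w : J → B, ∑ c, j (w c) * e c = 0 → w = 0)
    (ρ : R → Matrix (J × Fin S.n) (J × Fin S.n) B[X])
    (hρ : ∀ g i, S.ι (e i.1) * S.t ^ (i.2 : ℕ) * g =
      ∑ k, S.θ j (ρ g i k) * (S.ι (e k.1) * S.t ^ (k.2 : ℕ)))
    (g : R) (m : ℕ) (hg : S.dle g m) :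
    (ρ g).det.natDegree ≤ Fintype.card J * m := by
  have h := nrd_det_deg (ρ g) (fun k => (k.2 : ℕ)) S.n m (by
    intro i k hik
    by_contra hlt
    have h1 : S.dle (S.ι (e i.1) * S.t ^ (i.2 : ℕ)) i.2 := by
      intro a ha
      rw [S.hcoeff, Finsupp.single_eq_of_ne (by omega)]
    have h2 := S.dle_mul h1 hg _ (not_le.1 hlt)
    rw [hρ, S.coeff_sum j e (fun k => ρ g i k)] at h2
    have h3 := (mul_eq_zero.1 h2).resolve_right (pow_ne_zero _ (inv_ne_zero S.hu0))
    have h4 := congrFun (he (fun c => (ρ g i (c, k.2)).coeff (ρ g i k).natDegree) h3) k.1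
    exact hik (Polynomial.leadingCoeff_eq_zero.1 h4))
  rw [Fintype.card_prod, Fintype.card_fin, mul_comm (Fintype.card J), mul_assoc] at h
  exact Nat.le_of_mul_le_mul_left h S.hn

theorem θ_map {F E : Type*} [Field F] [Field E] (jF : F →+* D) (j : E →+* D) (κ : F →+* E)
    (hκ : ∀ c, j (κ c) = jF c) (p : F[X]) : S.θ j (p.map κ) = S.θ jF p := by
  apply S.coeff_inj
  intro k
  simp [coeff_θ, hκ]

theorem θ_comm {F : Type*} [Field F] (jF : F →+* D)
    (hc : ∀ c, jF c ∈ Subring.center D) (hf : ∀ c, S.σ (jF c) = jF c) (p : F[X]) (g : R) :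
    S.θ jF p * g = g * S.θ jF p := by
  have h1 : ∀ c, Commute (S.ι (jF c)) g := by
    intro c
    refine S.ind (P := fun g => Commute (S.ι (jF c)) g) (Commute.zero_right _)
      (fun _ _ => Commute.add_right) (fun a i => ?_) g
    refine Commute.mul_right ?_ (Commute.pow_right ?_ i)
    · change _ * _ = _ * _
      rw [← map_mul, ← map_mul, (Subring.mem_center_iff.1 (hc c) a)]
    · change _ * _ = _ * _
      rw [S.hmul, hf]
  induction p using Polynomial.induction_on' with
  | add p q hp hq => rw [map_add, add_mul, mul_add, hp, hq]
  | monomial l a =>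
    rw [S.θ_monomial]
    exact Commute.mul_left (h1 a) (Commute.pow_left (S.x_comm g) l)

theorem θ_inj {B : Type*} [Field B] (j : B →+* D) (p : B[X]) (h : S.θ j p = 0) : p = 0 := by
  ext l
  have h0 : S.coeff (S.θ j p) (S.n * l) = j (p.coeff l) * S.u⁻¹ ^ l := by
    rw [coeff_θ, if_pos (dvd_mul_right _ _), Nat.mul_div_cancel_left _ S.hn]
  rw [h, map_zero, Finsupp.zero_apply] at h0
  have := (mul_eq_zero.1 h0.symm).resolve_right (pow_ne_zero _ (inv_ne_zero S.hu0))
  simpa using this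

theorem alg_part {F E : Type*} [Field F] [Field E] (jF : F →+* D) (j : E →+* D) (κ : F →+* E)
    (hκ : ∀ c, j (κ c) = jF c) 
    (hc : ∀ c, jF c ∈ Subring.center D) (hf : ∀ c, S.σ (jF c) = jF c)
    (hord : ∀ m : ℕ, 0 < m → (∀ z ∈ Subring.center D, (S.σ ^ m) z = z) → S.n ≤ m)
    (hj : ∀ z ∈ Subring.center D, S.σ z = z → ∃ c, jF c = z)
    {J : Type*} [Fintype J] (e : J → D) (he : ∀ w : J → F, ∑ c, jF (w c) * e c = 0 → w = 0)
    (hs : ∀ z : D, ∃ w : J → F, z = ∑ c, jF (w c) * e c)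
    {I : Type*} [Fintype I] [DecidableEq I] [Nonempty I]
    (hcard : Fintype.card J * S.n = Fintype.card I * Fintype.card I)
    (r : R →+* Matrix I I E[X]) (hr : ∀ p : F[X], r (S.θ jF p) = Matrix.scalar I (p.map κ)) :
    (∀ f : R, f ≠ 0 → ∃ (g : R) (z : F[X]), z ≠ 0 ∧ g * f = S.θ jF z) ∧
    ∀ f : R, ∃ a b : F[X], b ≠ 0 ∧ b.map κ * (r f).det = a.map κ := by
  letI : Algebra F[X] R := (S.θ jF).toAlgebra' (S.θ_comm jF hc hf)
  have hsm : ∀ (p : F[X]) (g : R), p • g = S.θ jF p * g := fun _ _ => rfl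
  let b : Module.Basis (J × Fin S.n) F[X] R :=
    Module.Basis.mk (v := fun k => S.ι (e k.1) * S.t ^ (k.2 : ℕ))
      (by
        rw [Fintype.linearIndependent_iff]
        intro p hp k
        have := S.li jF e he p (by simpa only [hsm] using hp)
        rw [this]; rfl)
      (by
        rintro f -
        obtain ⟨p, hp⟩ := S.spans jF e hs f
        rw [hp]
        exact Submodule.sum_mem _ fun k _ =>
          Submodule.smul_mem _ (p k) (Submodule.subset_span ⟨k, rfl⟩))
  haveI : Module.Free F[X] R := Module.Free.of_basis b
  haveI : Module.Finite F[X] R := Module.Finite.of_basis b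
  haveI : Nontrivial R := ⟨1, 0, S.one_ne⟩
  have hfr : Module.finrank F[X] R = Fintype.card I * Fintype.card I := by
    rw [Module.finrank_eq_card_basis b, Fintype.card_prod, Fintype.card_fin, hcard]
  have G := nrd_generic (Z := F[X]) (R := R) (K := FractionRing F[X])
    (fun a b hab => by
      by_contra! h
      exact S.mul_ne h.1 h.2 hab)
    (fun a ha => S.center_θ jF hord hj a ha)
  refine ⟨G.1, fun f => ?_⟩
  let φ : F[X] →+* FractionRing E[X] :=
    (algebraMap E[X] (FractionRing E[X])).comp (Polynomial.mapRingHom κ)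
  have hφ : Function.Injective φ :=
    (IsFractionRing.injective E[X] (FractionRing E[X])).comp (Polynomial.map_injective κ κ.injective)
  letI : Algebra F[X] (FractionRing E[X]) := φ.toAlgebra
  letI : Algebra (FractionRing F[X]) (FractionRing E[X]) := (IsFractionRing.lift hφ).toAlgebra
  haveI : IsScalarTower F[X] (FractionRing F[X]) (FractionRing E[X]) :=
    IsScalarTower.of_algebraMap_eq fun p => (IsFractionRing.lift_algebraMap hφ p).symm
  let ρ : R →ₐ[F[X]] Matrix I I (FractionRing E[X]) :=
    { ((algebraMap E[X] (FractionRing E[X])).mapMatrix).comp r with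
      commutes' := by
        intro p
        change (algebraMap E[X] (FractionRing E[X])).mapMatrix (r (S.θ jF p)) = _
        rw [hr, Matrix.algebraMap_eq_diagonal]
        ext i k
        by_cases h : i = k
        · subst h; simp; rfl
        · simp [Matrix.diagonal_apply_ne _ h] }
  obtain ⟨a, b, hb, hab⟩ := G.2 hfr ρ f
  refine ⟨a, b, hb, IsFractionRing.injective E[X] (FractionRing E[X]) ?_⟩
  rw [map_mul, RingHom.map_det]
  exact hab

theorem main {F E : Type*} [Field F] [Field E] (jF : F →+* D) (j : E →+* D) (κ : F →+* E)
    (hκ : ∀ c, j (κ c) = jF c) 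
    (hc : ∀ c, jF c ∈ Subring.center D) (hfix : ∀ c, S.σ (jF c) = jF c)
    (hord : ∀ m : ℕ, 0 < m → (∀ z ∈ Subring.center D, (S.σ ^ m) z = z) → S.n ≤ m)
    (hj : ∀ z ∈ Subring.center D, S.σ z = z → ∃ c, jF c = z)
    {J : Type*} [Fintype J] (e : J → D) (he : ∀ w : J → F, ∑ c, jF (w c) * e c = 0 → w = 0)
    (hs : ∀ z : D, ∃ w : J → F, z = ∑ c, jF (w c) * e c)
    {I : Type*} [Fintype I] [DecidableEq I] [Nonempty I]
    (hcard : Fintype.card J = Fintype.card I * Fintype.card I * S.n)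
    (vE : I → D) (hvE : ∀ w : I → E, ∑ c, j (w c) * vE c = 0 → w = 0)
    (ρ : R → Matrix (I × Fin S.n) (I × Fin S.n) E[X])
    (hρ : ∀ g i, S.ι (vE i.1) * S.t ^ (i.2 : ℕ) * g =
      ∑ k, S.θ j (ρ g i k) * (S.ι (vE k.1) * S.t ^ (k.2 : ℕ)))
    (f : R) (m : ℕ) (hf0 : S.coeff f m ≠ 0) (hf : S.dle f m) :
    (∀ k : ℕ, j ((ρ f).det.coeff k) ∈ Subring.center D ∧
      S.σ (j ((ρ f).det.coeff k)) = j ((ρ f).det.coeff k)) ∧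
    (ρ f).det.natDegree = Fintype.card I * m := by
  obtain ⟨r, hrρ⟩ := S.rep_hom j vE hvE ρ hρ
  have hr : ∀ p : F[X], r (S.θ jF p) = Matrix.scalar _ (p.map κ) := by
    intro p
    rw [hrρ, ← S.θ_map jF j κ hκ]
    refine S.rep_scalar j vE hvE ρ hρ _ ?_
    rw [S.θ_map jF j κ hκ]
    exact S.θ_comm jF hc hfix p
  haveI : Nonempty (Fin S.n) := ⟨⟨0, S.hn⟩⟩
  obtain ⟨h1, h2⟩ := S.alg_part jF j κ hκ hc hfix hord hj e he hs (I := I × Fin S.n)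
    (by rw [hcard, Fintype.card_prod, Fintype.card_fin]; ring) r hr
  constructor
  · obtain ⟨a, b, hb, hab⟩ := h2 f
    refine S.θ_central j fun g => ?_
    rw [hrρ] at hab
    have hb0 : S.θ jF b ≠ 0 := fun h => hb (S.θ_inj jF b h)
    have h3 : S.θ jF b * S.θ j (ρ f).det = S.θ jF a := by
      rw [← S.θ_map jF j κ hκ, ← S.θ_map jF j κ hκ, ← map_mul, hab]
    by_contra h
    refine S.mul_ne hb0 (sub_ne_zero.2 h) ?_
    rw [mul_sub, ← mul_assoc, h3, ← mul_assoc, S.θ_comm jF hc hfix b g, mul_assoc, h3,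
      S.θ_comm jF hc hfix, sub_self]
  · have hfne : f ≠ 0 := by rintro rfl; simp at hf0
    obtain ⟨g, z, hz, hgz⟩ := h1 f hfne
    have hgne : g ≠ 0 := by
      rintro rfl
      rw [zero_mul] at hgz
      exact hz (S.θ_inj jF z hgz.symm)
    obtain ⟨k, hg0, hg⟩ := S.exists_deg hgne
    have hkm : k + m = S.n * z.natDegree := by
      have h3 : S.coeff (S.θ jF z) (k + m) ≠ 0 := hgz ▸ S.mul_top_ne hg hf hg0 hf0
      have h4 : S.coeff (S.θ jF z) (S.n * z.natDegree) ≠ 0 := by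
        rw [coeff_θ, if_pos (dvd_mul_right _ _), Nat.mul_div_cancel_left _ S.hn]
        refine mul_ne_zero ((_root_.map_ne_zero _).2 ?_) (pow_ne_zero _ (inv_ne_zero S.hu0))
        exact (Polynomial.leadingCoeff_ne_zero).2 hz
      apply le_antisymm
      · rw [coeff_θ] at h3
        split_ifs at h3 with h5
        · obtain ⟨q, hq⟩ := h5
          rw [hq, Nat.mul_div_cancel_left _ S.hn] at h3
          rw [hq]
          refine Nat.mul_le_mul_left _ (Polynomial.le_natDegree_of_ne_zero fun h => ?_)
          rw [h] at h3; simp at h3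
        · exact absurd rfl h3
      · by_contra h5
        exact h4 (hgz ▸ S.dle_mul hg hf _ (not_le.1 h5))
    have hdet : (ρ g).det * (ρ f).det = (z.map κ) ^ (Fintype.card I * S.n) := by
      rw [← hrρ, ← hrρ, ← Matrix.det_mul, ← map_mul, hgz, hr, Matrix.scalar_apply, Matrix.det_diagonal]
      simp
    have hz' : z.map κ ≠ 0 := (Polynomial.map_ne_zero_iff κ.injective).2 hz
    have hne : (ρ g).det * (ρ f).det ≠ 0 := by rw [hdet]; exact pow_ne_zero _ hz'
    have hd := congrArg natDegree hdet
    rw [natDegree_mul (left_ne_zero_of_mul hne) (right_ne_zero_of_mul hne), natDegree_pow,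
      Polynomial.natDegree_map, mul_assoc, ← hkm, mul_add] at hd
    have e1 := S.rep_deg j vE hvE ρ hρ g k hg
    have e2 := S.rep_deg j vE hvE ρ hρ f m hf
    omega

end NrdSk


theorem nrd_fixed {C : Type*} [Field C] (τ : C ≃+* C) (n : ℕ) (hn : 0 < n) (hτ : orderOf τ = n) :
    ∃ F : Subfield C, (∀ c, c ∈ F ↔ τ c = c) ∧ Module.finrank F C = n := by
  classical
  let G := Subgroup.zpowers (τ : RingAut C)
  have hcard : Nat.card G = n := (Nat.card_zpowers (τ : RingAut C)).trans hτ
  haveI : Finite G := Nat.finite_of_card_ne_zero (by rw [hcard]; exact hn.ne')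
  letI := Fintype.ofFinite G
  haveI : FaithfulSMul G C := ⟨fun {a b} h => Subtype.ext (RingEquiv.ext fun x => h x)⟩
  refine ⟨FixedPoints.subfield G C, ?_, ?_⟩
  · intro c
    constructor
    · intro h
      exact h ⟨τ, Subgroup.mem_zpowers _⟩
    · intro h g
      have : G ≤ MulAction.stabilizer (RingAut C) c := by
        rw [Subgroup.zpowers_le]; exact h
      exact this g.2
  · rw [FixedPoints.finrank_eq_card, ← Nat.card_eq_fintype_card, hcard]

theorem nrd_fix_D {D : Type*} [DivisionRing D] (d : ℕ) (hdpos : 0 < d)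
    (hd : Module.finrank (Subring.center D) D = d * d) (σ : D ≃+* D) (n : ℕ)
    (horder : IsLeast {m : ℕ | 0 < m ∧ ∀ z ∈ Subring.center D, (σ ^ m) z = z} n) :
    ∃ (F : Subfield (Subring.center D)) (e : Fin n × Fin (d * d) → D),
      (∀ c, c ∈ F ↔ σ (c : D) = c) ∧
      (∀ w : Fin n × Fin (d * d) → F, ∑ c, ((w c : Subring.center D) : D) * e c = 0 → w = 0) ∧
      (∀ z, ∃ w : Fin n × Fin (d * d) → F, z = ∑ c, ((w c : Subring.center D) : D) * e c) := by
  let τ : Subring.center D ≃+* Subring.center D := Subring.centerCongr σ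
  have hτ : ∀ c, ((τ c : Subring.center D) : D) = σ c := fun _ => rfl
  have hτp : ∀ (m : ℕ) c, (((τ ^ m) c : Subring.center D) : D) = (σ ^ m) c := by
    intro m
    induction m with
    | zero => intro c; rfl
    | succ m ih => intro c; rw [pow_succ, pow_succ]; exact ih (τ c)
  have hn : 0 < n := horder.1.1
  have hord : orderOf τ = n := by
    rw [orderOf_eq_iff hn]
    constructor
    · ext c
      rw [hτp]; exact horder.1.2 c c.2
    · intro m hm hm0 h
      refine absurd (horder.2 ⟨hm0, fun z hz => ?_⟩) (not_le.2 hm)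
      rw [← hτp m ⟨z, hz⟩, h]; rfl
  obtain ⟨F, hF, hfr⟩ := nrd_fixed τ n hn hord
  haveI : Module.Finite F (Subring.center D) := Module.finite_of_finrank_pos (hfr ▸ hn)
  haveI : Module.Finite (Subring.center D) D :=
    Module.finite_of_finrank_pos (hd ▸ Nat.mul_pos hdpos hdpos)
  let bC := Module.finBasisOfFinrankEq F (Subring.center D) hfr
  let bD := Module.finBasisOfFinrankEq (Subring.center D) D hd
  let b := bC.smulTower bD
  have hsm : ∀ (c : F) (z : D), c • z = ((c : Subring.center D) : D) * z := fun _ _ => rfl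
  refine ⟨F, b, ?_, ?_, ?_⟩
  · intro c
    rw [hF, ← hτ]; exact Subtype.ext_iff
  · intro w hw
    funext c
    exact Fintype.linearIndependent_iff.1 b.linearIndependent w (by simpa only [hsm] using hw) c
  · intro z
    exact ⟨b.repr z, by simpa only [hsm] using (b.sum_repr z).symm⟩

end NrdHelpers


/-- Let `D` be a central division algebra of degree `d` over `C` with a maximal
subfield `E` (`[E:C] = d`), `σ` an automorphism of `D` with `σ^n = i_u`,
`u ∈ Fix(σ)`, `σ|_C` of order `n`, `F = C ∩ Fix(σ)`, and `N` the reduced norm of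
`D(t;σ)` over `F(x)`, computed as the determinant of the left regular
representation on an `E(x)`-basis of size `dn`. Then for every `f ∈ D[t;σ]` of
degree `m`, `N(f) ∈ F[x]` and `deg_x N(f) = d·m`. -/
theorem norm_in_Fx_and_degree_dm
    (D : Type) [DivisionRing D] (d : ℕ) (hdpos : 0 < d)
    (hd : Module.finrank (Subring.center D) D = d * d)
    -- E, a maximal subfield of D of degree d over the center C:
    (E : Type) [Field E] (j : E →+* D)
    (hEC : ∀ z : D, z ∈ Subring.center D → z ∈ Set.range j)
    (vE : Fin d → D)
    (hvE : ∀ x : D, ∃! w : Fin d → E, x = ∑ k : Fin d, j (w k) * vE k)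
    (n : ℕ) (hn : 0 < n)
    (σ : D ≃+* D) (u : D) (hu0 : u ≠ 0) (hσu : σ u = u)
    (hinner : ∀ z : D, (σ ^ n) z = u * z * u⁻¹)
    (horder : IsLeast {m : ℕ | 0 < m ∧ ∀ z ∈ Subring.center D, (σ ^ m) z = z} n)
    -- R = D[t;σ]:
    (R : Type) [Ring R] (ι : D →+* R) (t : R)
    (hmul : ∀ a : D, t * ι a = ι (σ a) * t)
    (coeff : R →+ (ℕ →₀ D))
    (hcoeff : ∀ (a : D) (i : ℕ), coeff (ι a * t ^ i) = Finsupp.single i a)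
    (hrepr : ∀ x : R, (coeff x).sum (fun i a => ι a * t ^ i) = x)
    -- the left regular representation on the E(x)-basis {v_a t^i} of size dn,
    -- where x = u⁻¹t^n, and the reduced norm N = det ∘ ρ:
    (v : Fin (d * n) → R)
    (hv : ∀ (a : Fin d) (i : Fin n), ∃ k : Fin (d * n), v k = ι (vE a) * t ^ (i : ℕ))
    (ρ : R → Matrix (Fin (d * n)) (Fin (d * n)) (Polynomial E))
    (hρ : ∀ (g : R) (i : Fin (d * n)), v i * g =
      ∑ k : Fin (d * n), ((ρ g i k).sum fun l a => ι (j a) * (ι u⁻¹ * t ^ n) ^ l) * v k)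
    (N : R → Polynomial E) (hN : ∀ g : R, N g = (ρ g).det)
    (f : R) (m : ℕ) (hdeg : coeff f m ≠ 0 ∧ ∀ i : ℕ, m < i → coeff f i = 0) :
    (∀ k : ℕ, j ((N f).coeff k) ∈ Subring.center D ∧
      σ (j ((N f).coeff k)) = j ((N f).coeff k)) ∧
    (N f).natDegree = d * m := by
  obtain ⟨F, e, hF, he, hs⟩ := nrd_fix_D d hdpos hd σ n horder
  let S : NrdSk D R := ⟨n, hn, σ, u, hu0, hσu, hinner, ι, t, hmul, coeff, hcoeff, hrepr⟩
  let jF : F →+* D := (Subring.center D).subtype.comp F.subtype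
  have hκ0 : ∀ c : F, jF c ∈ j.fieldRange := fun c => by
    obtain ⟨y, hy⟩ := hEC _ (c : Subring.center D).2
    exact ⟨y, hy⟩
  choose κ0 hκ using hκ0
  let κ : F →+* E :=
    { toFun := κ0
      map_one' := j.injective (by rw [hκ, map_one, map_one])
      map_zero' := j.injective (by rw [hκ, map_zero, map_zero])
      map_mul' := fun a b => j.injective (by rw [hκ, map_mul, map_mul, hκ, hκ])
      map_add' := fun a b => j.injective (by rw [hκ, map_add, map_add, hκ, hκ]) }
  have hli : ∀ w : Fin d → E, ∑ c, j (w c) * vE c = 0 → w = 0 := by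
    intro w hw
    obtain ⟨w0, -, h⟩ := hvE 0
    rw [h w hw.symm, ← h 0 (by simp)]
  choose q hq using hv
  have hvE0 : ∀ a, vE a ≠ 0 := by
    intro a ha
    have := congrFun (hli (Pi.single a 1) (by
      rw [Finset.sum_eq_single a]
      · simp [ha]
      · intro b _ hb; simp [hb]
      · simp)) a
    simp at this
  have hvEinj : Function.Injective vE := by
    intro a b hab
    by_contra hne
    have := congrFun (hli (Pi.single a 1 - Pi.single b 1) (by
      simp [sub_mul, Finset.sum_sub_distrib, Pi.single_apply, apply_ite j, ite_mul, hab])) a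
    simp [hne] at this
  let q' : Fin d × Fin n → Fin (d * n) := fun k => q k.1 k.2
  have hq' : ∀ k, v (q' k) = ι (vE k.1) * t ^ (k.2 : ℕ) := fun k => hq _ _
  have hqinj : Function.Injective q' := by
    rintro ⟨a, i⟩ ⟨b, l⟩ h
    have h1 := congrArg coeff ((hq' _).symm.trans ((congrArg v h).trans (hq' _)))
    rw [hcoeff, hcoeff, Finsupp.single_eq_single_iff] at h1
    rcases h1 with ⟨h2, h3⟩ | ⟨h2, -⟩
    · exact Prod.ext (hvEinj h3) (Fin.ext h2)
    · exact absurd h2 (hvE0 _)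
  have hqbij : Function.Bijective q' :=
    (Fintype.bijective_iff_injective_and_card q').2 ⟨hqinj, by simp⟩
  let Q : Fin d × Fin n ≃ Fin (d * n) := Equiv.ofBijective q' hqbij
  haveI : Nonempty (Fin d) := ⟨⟨0, hdpos⟩⟩
  have key := S.main jF j κ hκ (fun c => (c : Subring.center D).2)
    (fun c => (hF c).1 c.2) (fun m hm h => horder.2 ⟨hm, h⟩)
    (fun z hz h => ⟨⟨⟨z, hz⟩, (hF ⟨z, hz⟩).2 h⟩, rfl⟩) e he hs (I := Fin d)
    (by simp [S, mul_comm]) vE hli (fun g => (ρ g).submatrix Q Q)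
    (by
      intro g i
      have h := hρ g (q' i)
      rw [hq', ← Q.sum_comp] at h
      refine h.trans (Finset.sum_congr rfl fun k _ => ?_)
      rw [S.θ_sum]
      congr 1
      exact hq' k) f m hdeg.1 hdeg.2
  rw [Matrix.det_submatrix_equiv_self, ← hN, Fintype.card_fin] at key
  exact key
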